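/- arXiv:1904.03570 — 7 statements merged into one kernel-verified Lean document; each statement's English description precedes it below -/
import Mathlib

section
/- Let l₁, l₂ ∈ ℝ and let x, g, τ, p₁, p₂ : ℝ → ℝ be functions such that x is twice differentiable, τ is twice differentiable, p₁ and p₂ are differentiable, and for all t: ẍ(t) = g(t) + τ(t). Define the disturbance estimate τ̂(t) := p₁(t) + l₁·ẋ(t) and the disturbance-derivative estimate σ̂(t) := p₂(t) + l₂·ẋ(t), and suppose the observer dynamics hold: ṗ₁(t) = −l₁·(g(t) + τ̂(t)) + σ̂(t) and ṗ₂(t) = −l₂·(g(t) + τ̂(t)). Then the estimation errors ẽ₁(t) := τ(t) − τ̂(t) and ẽ₂(t) := τ̇(t) − σ̂(t) are differentiable and satisfy, for all t: ẽ₁'(t) = −l₁·ẽ₁(t) + ẽ₂(t) and ẽ₂'(t) = −l₂·ẽ₁(t) + τ̈(t); equivalently, writing e(t) = (ẽ₁(t), ẽ₂(t)) ∈ ℝ², e'(t) = A₁ e(t) + τ̈(t)·(0,1) where A₁ is the matrix with rows (−l₁, 1) and (−l₂, 0). -/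
/-!
Differentiating `τ̂ = p₁ + l₁ ẋ` and substituting the observer law and the plant equation
`ẍ = g + τ` gives `τ̂' = -l₁ (g + τ̂) + σ̂ + l₁ (g + τ)`: the term `g` cancels and only the
error `τ - τ̂` remains. The same cancellation for `σ̂ = p₂ + l₂ ẋ` gives the second equation,
and the vector form is the two scalar equations read componentwise (`hasDerivAt_pi`).
-/

/-- Error dynamics of the second-order nonlinear disturbance observer:
the plant is `ẍ = g + τ`, the observer uses auxiliary variables `p₁, p₂` and gains `l₁, l₂`;
the estimation errors `ẽ₁ = τ − τ̂`, `ẽ₂ = τ̇ − σ̂` satisfy `ẽ' = A₁ ẽ + τ̈·(0,1)`. -/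
theorem disturbance_observer_error_dynamics
    (l₁ l₂ : ℝ) (x g τ p₁ p₂ : ℝ → ℝ)
    (hx : Differentiable ℝ x) (hx' : Differentiable ℝ (deriv x))
    (hτ : Differentiable ℝ τ) (hτ' : Differentiable ℝ (deriv τ))
    (hp₁ : Differentiable ℝ p₁) (hp₂ : Differentiable ℝ p₂)
    (hplant : ∀ t, deriv (deriv x) t = g t + τ t)
    (τhat σhat : ℝ → ℝ)
    (hτhat : τhat = fun t => p₁ t + l₁ * deriv x t)
    (hσhat : σhat = fun t => p₂ t + l₂ * deriv x t)
    (hobs₁ : ∀ t, deriv p₁ t = -l₁ * (g t + τhat t) + σhat t)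
    (hobs₂ : ∀ t, deriv p₂ t = -l₂ * (g t + τhat t)) :
    Differentiable ℝ (fun t => τ t - τhat t) ∧
    Differentiable ℝ (fun t => deriv τ t - σhat t) ∧
    (∀ t, deriv (fun s => τ s - τhat s) t
        = -l₁ * (τ t - τhat t) + (deriv τ t - σhat t)) ∧
    (∀ t, deriv (fun s => deriv τ s - σhat s) t
        = -l₂ * (τ t - τhat t) + deriv (deriv τ) t) ∧
    (∀ t, deriv (fun s => (![τ s - τhat s, deriv τ s - σhat s] : Fin 2 → ℝ)) t
        = (Matrix.of ![![-l₁, 1], ![-l₂, 0]]).mulVec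
            ![τ t - τhat t, deriv τ t - σhat t]
          + deriv (deriv τ) t • (![0, 1] : Fin 2 → ℝ)) := by
  have h₁ : ∀ t, HasDerivAt (fun s => τ s - τhat s)
      (-l₁ * (τ t - τhat t) + (deriv τ t - σhat t)) t := by
    intro t
    have hd : HasDerivAt τhat (deriv p₁ t + l₁ * deriv (deriv x) t) t := by
      rw [hτhat]
      exact (hp₁ t).hasDerivAt.add ((hx' t).hasDerivAt.const_mul l₁)
    refine ((hτ t).hasDerivAt.sub hd).congr_deriv ?_
    rw [hobs₁, hplant]
    ring
  have h₂ : ∀ t, HasDerivAt (fun s => deriv τ s - σhat s)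
      (-l₂ * (τ t - τhat t) + deriv (deriv τ) t) t := by
    intro t
    have hd : HasDerivAt σhat (deriv p₂ t + l₂ * deriv (deriv x) t) t := by
      rw [hσhat]
      exact (hp₂ t).hasDerivAt.add ((hx' t).hasDerivAt.const_mul l₂)
    refine ((hτ' t).hasDerivAt.sub hd).congr_deriv ?_
    rw [hobs₂, hplant]
    ring
  refine ⟨fun t => (h₁ t).differentiableAt, fun t => (h₂ t).differentiableAt,
    fun t => (h₁ t).deriv, fun t => (h₂ t).deriv, fun t => HasDerivAt.deriv ?_⟩
  rw [hasDerivAt_pi]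
  intro i
  fin_cases i
  · simpa [Matrix.mulVec, dotProduct, Fin.sum_univ_two, mul_comm] using h₁ t
  · simpa [Matrix.mulVec, dotProduct, Fin.sum_univ_two, mul_comm] using h₂ t
end

section
/- Let E be a real normed vector space, let e : ℝ → E be continuous, and let V : ℝ → ℝ be differentiable. Suppose there are constants α₁, α₂, a, b > 0 such that for all t: α₁·‖e(t)‖² ≤ V(t) ≤ α₂·‖e(t)‖² and V'(t) ≤ −‖e(t)‖·(a·‖e(t)‖ − b). Then for every η > 0 there exists T ∈ ℝ such that for all t ≥ T, ‖e(t)‖ ≤ √(α₂/α₁)·(b/a) + η. -/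
/-! A sublevel set `{V ≤ M}` outside of which `V` decreases at a uniform rate `c > 0` is reached in
finite time, by the mean value inequality and because `V ≥ 0`, and cannot be left again, because
`V' < 0` on the level `V = M`. For the theorem take `M = α₂ r²` with `r = b/a + η/√(α₂/α₁)`:
where `V ≥ M` the upper sandwich bound gives `‖e‖ ≥ r > b/a`, hence `V' ≤ -r (a r - b) < 0`, while
`V ≤ M` and the lower bound give `‖e‖ ≤ √(α₂/α₁) r`, which is the claimed radius. -/

/-- A nonnegative function that decreases at rate at least `c > 0` wherever its value is at least
`M` eventually stays at most `M`. -/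
theorem eventually_le_of_deriv_le_neg {V : ℝ → ℝ} (hV : Differentiable ℝ V) {M c : ℝ} (hc : 0 < c)
    (h0 : ∀ t, 0 ≤ V t) (hd : ∀ t, M ≤ V t → deriv V t ≤ -c) :
    ∃ T : ℝ, ∀ t ≥ T, V t ≤ M := by
  obtain ⟨T, hT⟩ : ∃ T, V T ≤ M := by
    by_contra! h
    have hx : (0 : ℝ) ≤ (V 0 + 1) / c := div_nonneg (by linarith [h0 0]) hc.le
    have h1 := image_sub_le_mul_sub_of_deriv_le hV (fun t => hd t (h t).le) hx
    have h2 : c * ((V 0 + 1) / c) = V 0 + 1 := mul_div_cancel₀ _ hc.ne'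
    linarith [h0 ((V 0 + 1) / c)]
  refine ⟨T, fun t ht => ?_⟩
  exact image_le_of_deriv_right_lt_deriv_boundary (f' := deriv V) (B := fun _ => M)
    (B' := fun _ => 0) hV.continuous.continuousOn
    (fun x _ => (hV x).hasDerivAt.hasDerivWithinAt) hT (fun x => hasDerivAt_const x M)
    (fun x _ hx => by linarith [hd x hx.ge]) (Set.right_mem_Icc.2 ht)

/-- Uniform ultimate boundedness from a quadratically sandwiched Lyapunov function whose
derivative is negative outside the ball of radius `b/a`: the trajectory ultimately stays
within `√(α₂/α₁)·(b/a)`, up to any margin `η`. -/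
theorem uniform_ultimate_boundedness
    {E : Type*} [NormedAddCommGroup E] [NormedSpace ℝ E]
    (e : ℝ → E) (he : Continuous e) (V : ℝ → ℝ) (hV : Differentiable ℝ V)
    (α₁ α₂ a b : ℝ) (hα₁ : 0 < α₁) (hα₂ : 0 < α₂) (ha : 0 < a) (hb : 0 < b)
    (hlow : ∀ t, α₁ * ‖e t‖ ^ 2 ≤ V t)
    (hup : ∀ t, V t ≤ α₂ * ‖e t‖ ^ 2)
    (hder : ∀ t, deriv V t ≤ -(‖e t‖ * (a * ‖e t‖ - b))) :
    ∀ η > 0, ∃ T : ℝ, ∀ t ≥ T, ‖e t‖ ≤ Real.sqrt (α₂ / α₁) * (b / a) + η := by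
  intro η hη
  set s := Real.sqrt (α₂ / α₁) with hs
  have hs0 : 0 < s := Real.sqrt_pos.2 (div_pos hα₂ hα₁)
  have hs2 : α₁ * s ^ 2 = α₂ := by
    rw [hs, Real.sq_sqrt (div_pos hα₂ hα₁).le]
    field_simp
  set r := b / a + η / s with hr
  have hr0 : 0 < r := by positivity
  have hsr : s * r = s * (b / a) + η := by
    rw [hr]
    field_simp
  have har : 0 < a * r - b := by
    have : a * r - b = a * (η / s) := by
      rw [hr]
      field_simp
      ring
    rw [this]
    positivity
  obtain ⟨T, hT⟩ := eventually_le_of_deriv_le_neg hV (M := α₂ * r ^ 2) (mul_pos hr0 har)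
    (fun t => (by positivity : 0 ≤ α₁ * ‖e t‖ ^ 2).trans (hlow t)) (fun t ht => by
      have h1 : r ≤ ‖e t‖ := le_of_pow_le_pow_left₀ two_ne_zero (norm_nonneg _)
        (le_of_mul_le_mul_left (ht.trans (hup t)) hα₂)
      have h2 : a * r - b ≤ a * ‖e t‖ - b := by gcongr
      have h3 := mul_le_mul h1 h2 har.le (norm_nonneg (e t))
      linarith [hder t])
  refine ⟨T, fun t ht => ?_⟩
  rw [← hsr]
  have h1 : α₁ * ‖e t‖ ^ 2 ≤ α₁ * (s * r) ^ 2 := by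
    calc α₁ * ‖e t‖ ^ 2 ≤ α₂ * r ^ 2 := (hlow t).trans (hT t ht)
      _ = α₁ * (s * r) ^ 2 := by rw [← hs2]; ring
  exact le_of_pow_le_pow_left₀ two_ne_zero (by positivity) (le_of_mul_le_mul_left h1 hα₁)
end

section
/- Let n ∈ ℕ, let A be a real n×n matrix, B ∈ ℝⁿ, and let P and Q be symmetric positive definite real n×n matrices satisfying Aᵀ P + P A = −Q. Let ε ≥ 0, let d : ℝ → ℝ satisfy |d(t)| ≤ ε for all t, and let e : ℝ → ℝⁿ be differentiable with e'(t) = A e(t) + d(t)·B for all t. Set λ₁ := 2·‖P B‖·ε / λ_min(Q). Then for every η > 0 there exists T ∈ ℝ such that for all t ≥ T, ‖e(t)‖ ≤ √(λ_max(P)/λ_min(P))·λ₁ + η, where λ_min and λ_max denote smallest and largest eigenvalues and ‖·‖ is the Euclidean norm. -/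
/-!
Take the Lyapunov function `V t = ⟪e t, P (e t)⟫`. The Lyapunov equation gives
`V' = -⟪e, Q e⟫ + 2 d ⟪e, P B⟫ ≤ -q ‖e‖² + q λ₁ ‖e‖`, where `q = λ_min(Q)`. By
`‖e‖ λ₁ ≤ (‖e‖² + λ₁²) / 2` and the Rayleigh bound `V ≤ M ‖e‖²` with `M = λ_max(P)`, this becomes
the linear differential inequality `V' ≤ -k (V - M λ₁²)` with `k = q / (2 M) > 0`. Hence
`V - M λ₁²` is at most a multiple of `exp (-k t)` for `t ≥ 0`
(`exists_forall_ge_le_of_deriv_le`), so it is eventually smaller than `λ_min(P) η²`, and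
`λ_min(P) ‖e‖² ≤ V` yields `‖e‖ ≤ √(M / λ_min(P)) λ₁ + η`.
-/

open Matrix
open scoped RealInnerProductSpace

/-- Expansion of the quadratic form of a symmetric matrix in an orthonormal eigenbasis. -/
lemma inner_toEuclideanLin_eq_sum {n : ℕ} {S : Matrix (Fin n) (Fin n) ℝ} (hS : S.IsHermitian)
    (x : EuclideanSpace ℝ (Fin n)) :
    ⟪x, toEuclideanLin S x⟫ = ∑ i, hS.eigenvalues i * ⟪hS.eigenvectorBasis i, x⟫ ^ 2 := by
  rw [← hS.eigenvectorBasis.sum_inner_mul_inner]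
  refine Finset.sum_congr rfl fun i _ => ?_
  have hev : toEuclideanLin S (hS.eigenvectorBasis i)
      = hS.eigenvalues i • hS.eigenvectorBasis i := by
    ext j
    exact congrFun (hS.mulVec_eigenvectorBasis i) j
  have hsym : ⟪hS.eigenvectorBasis i, toEuclideanLin S x⟫
      = hS.eigenvalues i * ⟪hS.eigenvectorBasis i, x⟫ := by
    rw [← (isSymmetric_toEuclideanLin_iff.mpr hS) _ x, hev, real_inner_smul_left]
  rw [hsym, real_inner_comm]
  ring

lemma iInf_eigenvalues_mul_le {n : ℕ} {S : Matrix (Fin n) (Fin n) ℝ} (hS : S.IsHermitian)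
    (x : EuclideanSpace ℝ (Fin n)) :
    (⨅ i, hS.eigenvalues i) * ‖x‖ ^ 2 ≤ ⟪x, toEuclideanLin S x⟫ := by
  rw [inner_toEuclideanLin_eq_sum hS, ← hS.eigenvectorBasis.sum_sq_inner_right, Finset.mul_sum]
  gcongr with i
  exact ciInf_le (Set.finite_range _).bddBelow i

lemma le_iSup_eigenvalues_mul {n : ℕ} {S : Matrix (Fin n) (Fin n) ℝ} (hS : S.IsHermitian)
    (x : EuclideanSpace ℝ (Fin n)) :
    ⟪x, toEuclideanLin S x⟫ ≤ (⨆ i, hS.eigenvalues i) * ‖x‖ ^ 2 := by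
  rw [inner_toEuclideanLin_eq_sum hS, ← hS.eigenvectorBasis.sum_sq_inner_right, Finset.mul_sum]
  gcongr with i
  exact le_ciSup (Set.finite_range _).bddAbove i

lemma iInf_eigenvalues_pos {n : ℕ} [NeZero n] {S : Matrix (Fin n) (Fin n) ℝ} (hS : S.PosDef) :
    0 < ⨅ i, hS.1.eigenvalues i := by
  obtain ⟨i, hi⟩ := exists_eq_ciInf_of_finite (f := hS.1.eigenvalues)
  rw [← hi]
  exact hS.eigenvalues_pos i

lemma inner_toEuclideanLin_left {n : ℕ} (A : Matrix (Fin n) (Fin n) ℝ)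
    (x y : EuclideanSpace ℝ (Fin n)) :
    ⟪toEuclideanLin A x, y⟫ = ⟪x, toEuclideanLin Aᵀ y⟫ := by
  rw [← conjTranspose_eq_transpose_of_trivial, toEuclideanLin_conjTranspose_eq_adjoint,
    LinearMap.adjoint_inner_right]

/-- The Lyapunov equation, read on quadratic forms. -/
lemma inner_lyapunov {n : ℕ} {A P Q : Matrix (Fin n) (Fin n) ℝ} (hLyap : Aᵀ * P + P * A = -Q)
    (x : EuclideanSpace ℝ (Fin n)) :
    ⟪toEuclideanLin A x, toEuclideanLin P x⟫ + ⟪x, toEuclideanLin P (toEuclideanLin A x)⟫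
      = -⟪x, toEuclideanLin Q x⟫ := by
  have h : toEuclideanLin Aᵀ (toEuclideanLin P x) + toEuclideanLin P (toEuclideanLin A x)
      = -toEuclideanLin Q x := by
    have := congrArg (fun S => toEuclideanLin S x) hLyap
    simpa using this
  rw [inner_toEuclideanLin_left, ← inner_add_right, h, inner_neg_right]

/-- A linear differential inequality `V' ≤ -k (V - c)` with `k > 0` forces `limsup V ≤ c`:
the function `(V - c) exp (k t)` is nonincreasing. -/
lemma exists_forall_ge_le_of_deriv_le {V V' : ℝ → ℝ} {k c δ : ℝ} (hk : 0 < k) (hδ : 0 < δ)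
    (hV : ∀ t, HasDerivAt V (V' t) t) (hle : ∀ t, V' t ≤ -k * (V t - c)) :
    ∃ T : ℝ, ∀ t ≥ T, V t ≤ c + δ := by
  have hderiv : ∀ t, HasDerivAt (fun t => (V t - c) * Real.exp (k * t))
      (V' t * Real.exp (k * t) + (V t - c) * (Real.exp (k * t) * k)) t := fun t => by
    have hexp : HasDerivAt (fun t => Real.exp (k * t)) (Real.exp (k * t) * k) t := by
      simpa using ((hasDerivAt_id t).const_mul k).exp
    exact ((hV t).sub_const c).mul hexp
  have hanti : Antitone (fun t => (V t - c) * Real.exp (k * t)) := by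
    refine antitone_of_deriv_nonpos (fun t => (hderiv t).differentiableAt) fun t => ?_
    rw [(hderiv t).deriv]
    nlinarith [mul_le_mul_of_nonneg_right (hle t) (Real.exp_pos (k * t)).le]
  have htop : Filter.Tendsto (fun t => δ * Real.exp (k * t)) Filter.atTop Filter.atTop :=
    (Real.tendsto_exp_atTop.comp (Filter.tendsto_id.const_mul_atTop hk)).const_mul_atTop hδ
  obtain ⟨T, hT⟩ := Filter.eventually_atTop.1 (htop.eventually_ge_atTop (V 0 - c))
  refine ⟨max T 0, fun t ht => ?_⟩
  have h1 := hT t (le_trans (le_max_left _ _) ht)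
  have h2 : (V t - c) * Real.exp (k * t) ≤ (V 0 - c) * Real.exp (k * 0) :=
    hanti (le_trans (le_max_right _ _) ht)
  rw [mul_zero, Real.exp_zero, mul_one] at h2
  have h3 := le_of_mul_le_mul_right (h2.trans h1) (Real.exp_pos _)
  linarith


open Matrix

/-- Uniform ultimate boundedness of the disturbance-observer estimation error:
for the error dynamics `e' = A e + d·B` with `|d| ≤ ε`, `Aᵀ P + P A = −Q` with `P, Q ≻ 0`,
and `λ₁ = 2‖P B‖ε / λ_min(Q)`, the norm of `e` ultimately stays within
`√(λ_max(P)/λ_min(P))·λ₁`, up to any margin `η`. -/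
theorem observer_error_uniform_ultimate_bound
    (n : ℕ) (A P Q : Matrix (Fin n) (Fin n) ℝ) (B : EuclideanSpace ℝ (Fin n))
    (hP : P.PosDef) (hQ : Q.PosDef)
    (hLyap : Aᵀ * P + P * A = -Q)
    (ε : ℝ) (hε : 0 ≤ ε) (d : ℝ → ℝ) (hd : ∀ t, |d t| ≤ ε)
    (e : ℝ → EuclideanSpace ℝ (Fin n)) (he : Differentiable ℝ e)
    (hdyn : ∀ t, deriv e t = Matrix.toEuclideanLin A (e t) + d t • B)
    (lambda₁ : ℝ)
    (hlambda₁ : lambda₁ = 2 * ‖Matrix.toEuclideanLin P B‖ * ε / (⨅ i, hQ.1.eigenvalues i)) :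
    ∀ η > 0, ∃ T : ℝ, ∀ t ≥ T,
      ‖e t‖ ≤ Real.sqrt ((⨆ i, hP.1.eigenvalues i) / (⨅ i, hP.1.eigenvalues i)) * lambda₁
        + η := by
  intro η hη
  rcases Nat.eq_zero_or_pos n with rfl | hn
  · -- All vectors vanish, and the extremal eigenvalues take the value `0` over an empty index.
    refine ⟨0, fun t _ => ?_⟩
    have h0 : e t = 0 := Subsingleton.elim _ _
    simp [h0, hη.le]
  have : NeZero n := ⟨hn.ne'⟩
  have hq := iInf_eigenvalues_pos hQ
  have hm := iInf_eigenvalues_pos hP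
  have hM : 0 < ⨆ i, hP.1.eigenvalues i :=
    (hP.eigenvalues_pos ⟨0, hn⟩).trans_le (le_ciSup (Set.finite_range _).bddAbove _)
  have hQlow := iInf_eigenvalues_mul_le hQ.1
  have hPlow := iInf_eigenvalues_mul_le hP.1
  have hPup := le_iSup_eigenvalues_mul hP.1
  generalize (⨅ i, hQ.1.eigenvalues i) = q at *
  generalize (⨅ i, hP.1.eigenvalues i) = m at *
  generalize (⨆ i, hP.1.eigenvalues i) = M at *
  have hl0 : 0 ≤ lambda₁ := by rw [hlambda₁]; positivity
  have hql : q * lambda₁ = 2 * ‖toEuclideanLin P B‖ * ε := by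
    rw [hlambda₁]; field_simp
  have he' : ∀ t, HasDerivAt e (toEuclideanLin A (e t) + d t • B) t := fun t => by
    rw [← hdyn t]; exact (he t).hasDerivAt
  have hPe : ∀ t, HasDerivAt (fun s => toEuclideanLin P (e s))
      (toEuclideanLin P (toEuclideanLin A (e t) + d t • B)) t := fun t =>
    (LinearMap.toContinuousLinearMap (toEuclideanLin P)).hasFDerivAt.comp_hasDerivAt t (he' t)
  have hVd := fun t => (he' t).inner ℝ (hPe t)
  have hbound : ∀ t, ⟪e t, toEuclideanLin P (toEuclideanLin A (e t) + d t • B)⟫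
      + ⟪toEuclideanLin A (e t) + d t • B, toEuclideanLin P (e t)⟫
      ≤ -(q / (2 * M)) * (⟪e t, toEuclideanLin P (e t)⟫ - M * lambda₁ ^ 2) := by
    intro t
    have hsym : ⟪B, toEuclideanLin P (e t)⟫ = ⟪e t, toEuclideanLin P B⟫ := by
      rw [← (isSymmetric_toEuclideanLin_iff.mpr hP.1) B (e t), real_inner_comm]
    have hdist : d t * ⟪e t, toEuclideanLin P B⟫ ≤ ε * (‖e t‖ * ‖toEuclideanLin P B‖) := by
      refine (le_abs_self _).trans ?_
      rw [abs_mul]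
      exact mul_le_mul (hd t) (abs_real_inner_le_norm _ _) (abs_nonneg _) hε
    have hL := inner_lyapunov hLyap (e t)
    have hkV : q / (2 * M) * ⟪e t, toEuclideanLin P (e t)⟫ ≤ q / 2 * ‖e t‖ ^ 2 := by
      calc q / (2 * M) * ⟪e t, toEuclideanLin P (e t)⟫
          ≤ q / (2 * M) * (M * ‖e t‖ ^ 2) := by gcongr; exact hPup _
        _ = q / 2 * ‖e t‖ ^ 2 := by field_simp
    have hkM : q / (2 * M) * (M * lambda₁ ^ 2) = q / 2 * lambda₁ ^ 2 := by field_simp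
    have hqe : q * lambda₁ * ‖e t‖ = 2 * ‖toEuclideanLin P B‖ * ε * ‖e t‖ := by rw [hql]
    have hamgm := mul_nonneg hq.le (sq_nonneg (‖e t‖ - lambda₁))
    have hQt := hQlow (e t)
    rw [map_add, map_smul, inner_add_right, inner_add_left, real_inner_smul_left,
      real_inner_smul_right, hsym]
    nlinarith
  obtain ⟨T, hT⟩ := exists_forall_ge_le_of_deriv_le (k := q / (2 * M)) (δ := m * η ^ 2)
    (by positivity) (by positivity) hVd hbound
  refine ⟨T, fun t ht => ?_⟩
  have h1 : m * ‖e t‖ ^ 2 ≤ M * lambda₁ ^ 2 + m * η ^ 2 := (hPlow _).trans (hT t ht)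
  have h2 : ‖e t‖ ^ 2 ≤ M / m * lambda₁ ^ 2 + η ^ 2 := by
    refine le_of_mul_le_mul_left (h1.trans_eq ?_) hm
    field_simp
  have hs : √(M / m) ^ 2 = M / m := Real.sq_sqrt (by positivity)
  have hcross : 0 ≤ √(M / m) * lambda₁ * η := by positivity
  refine abs_le_of_sq_le_sq' ?_ (by positivity) |>.2
  rw [← hs] at h2
  nlinarith
end

section
/- Let c₁, c₂, K_p, K_i, K_d, Γ, m_p be real constants and set ϖ := K_p c₁ − K_i − K_d c₂. Let e_p : ℝ → ℝ be three times differentiable, let d : ℝ → ℝ be a function, and let S_q, S_p : ℝ → ℝ be differentiable and satisfy, for all t: Ṡ_q(t) = −(K_p ė_p(t) + K_i e_p(t) + K_d ë_p(t)) + d(t); m_p·Ṡ_p(t) = −Γ·sgn(S_p(t)) + K_p ė_p(t) + K_i e_p(t) + K_d ë_p(t); and S_p(t) = S_q(t) − (ë_p(t) + c₁ ė_p(t) + c₂ e_p(t)). Define V₁(t) := ½ m_p S_p(t)² + ½ S_q(t)² and V₂(t) := ½(K_p + K_d c₁ − K_i − K_d c₂)·ė_p(t)² + ½(K_p c₂ +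 K_i c₁ − K_i − K_d c₂)·e_p(t)² + ½(K_i + K_d c₂)·(e_p(t) + ė_p(t))². Then V₁ + V₂ is differentiable and for all t: (V₁ + V₂)'(t) = −Γ·|S_p(t)| + d(t)·S_q(t) − K_d·ë_p(t)² − ϖ·ė_p(t)² − K_i c₂·e_p(t)². -/
/-! Write `W = K_p ė_p + K_i e_p + K_d ë_p` for the virtual-coupling force. Along the dynamics
`V₁' = S_p (−Γ sgn S_p + W) + S_q (−W + d) = −Γ |S_p| + d S_q − W (S_q − S_p)`, and the relation
between the two surfaces turns the last term into `−W (ë_p + c₁ ė_p + c₂ e_p)`. The coefficients of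
`V₂` are chosen so that `V₂'` cancels all the mixed products `ė_p ë_p`, `e_p ë_p`, `e_p ė_p`, which
leaves a combination of squares. -/

theorem real_self_mul_sign (x : ℝ) : x * Real.sign x = |x| := by
  rcases lt_trichotomy x 0 with h | rfl | h
  · rw [Real.sign_of_neg h, abs_of_neg h, mul_neg_one]
  · simp
  · rw [Real.sign_of_pos h, abs_of_pos h, mul_one]


/-- The central Lyapunov-derivative identity in the stability proof of the IDO-PSMC:
with `ϖ = K_p c₁ − K_i − K_d c₂`,
`(V₁ + V₂)' = −Γ|S_p| + d·S_q − K_d ë_p² − ϖ ė_p² − K_i c₂ e_p²`. -/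
theorem ido_psmc_lyapunov_derivative_identity
    (c₁ c₂ Kp Ki Kd Γ mp : ℝ)
    (e_p : ℝ → ℝ)
    (hep : Differentiable ℝ e_p) (hep' : Differentiable ℝ (deriv e_p))
    (hep'' : Differentiable ℝ (deriv (deriv e_p)))
    (d : ℝ → ℝ)
    (S_q S_p : ℝ → ℝ)
    (hSq : Differentiable ℝ S_q) (hSp : Differentiable ℝ S_p)
    (hSq' : ∀ t, deriv S_q t
        = -(Kp * deriv e_p t + Ki * e_p t + Kd * deriv (deriv e_p) t) + d t)
    (hSp' : ∀ t, mp * deriv S_p t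
        = -Γ * Real.sign (S_p t) + Kp * deriv e_p t + Ki * e_p t
          + Kd * deriv (deriv e_p) t)
    (hrel : ∀ t, S_p t = S_q t - (deriv (deriv e_p) t + c₁ * deriv e_p t + c₂ * e_p t))
    (V₁ V₂ : ℝ → ℝ)
    (hV₁ : V₁ = fun t => 1 / 2 * mp * S_p t ^ 2 + 1 / 2 * S_q t ^ 2)
    (hV₂ : V₂ = fun t => 1 / 2 * (Kp + Kd * c₁ - Ki - Kd * c₂) * deriv e_p t ^ 2
        + 1 / 2 * (Kp * c₂ + Ki * c₁ - Ki - Kd * c₂) * e_p t ^ 2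
        + 1 / 2 * (Ki + Kd * c₂) * (e_p t + deriv e_p t) ^ 2) :
    Differentiable ℝ (V₁ + V₂) ∧
    ∀ t, deriv (V₁ + V₂) t
      = -Γ * |S_p t| + d t * S_q t - Kd * deriv (deriv e_p) t ^ 2
        - (Kp * c₁ - Ki - Kd * c₂) * deriv e_p t ^ 2 - Ki * c₂ * e_p t ^ 2 := by
  have key : ∀ t, HasDerivAt (V₁ + V₂)
      (-Γ * |S_p t| + d t * S_q t - Kd * deriv (deriv e_p) t ^ 2
        - (Kp * c₁ - Ki - Kd * c₂) * deriv e_p t ^ 2 - Ki * c₂ * e_p t ^ 2) t := by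
    intro t
    have he := (hep t).hasDerivAt
    have he' := (hep' t).hasDerivAt
    have hq := (hSq t).hasDerivAt
    have hp := (hSp t).hasDerivAt
    have h₁ := ((hp.pow 2).const_mul (1 / 2 * mp)).add ((hq.pow 2).const_mul (1 / 2))
    have h₂ := (((he'.pow 2).const_mul (1 / 2 * (Kp + Kd * c₁ - Ki - Kd * c₂))).add
      ((he.pow 2).const_mul (1 / 2 * (Kp * c₂ + Ki * c₁ - Ki - Kd * c₂)))).add
      (((he.add he').pow 2).const_mul (1 / 2 * (Ki + Kd * c₂)))
    subst hV₁ hV₂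
    refine (h₁.add h₂).congr_deriv ?_
    simp only [Pi.add_apply]
    push_cast
    rw [hSq' t, ← real_self_mul_sign]
    -- `mp` may vanish, so only the product `mp * deriv S_p t` is substituted; the relation between
    -- the surfaces enters multiplied by the coupling force.
    linear_combination S_p t * hSp' t
      + (Kp * deriv e_p t + Ki * e_p t + Kd * deriv (deriv e_p) t) * hrel t
  exact ⟨fun t => (key t).differentiableAt, fun t => (key t).deriv⟩
end

section
/- Let c₁ > 0, c₂ > 0, K_p, K_i, K_d > 0, ε > 0, λ₁ > 0, Γ, m_p be real constants with ϖ := K_p c₁ − K_i − K_d c₂ > 0 and Γ ≥ ε + λ₁. Let e_p : ℝ → ℝ be three times differentiable, let d : ℝ → ℝ satisfy |d(t)| ≤ ε + λ₁ for all t, and let S_q, S_p : ℝ → ℝ be differentiable and satisfy, for all t: Ṡ_q(t) = −(K_p ė_p(t) + K_i e_p(t) + K_d ë_p(t)) + d(t); m_p·Ṡ_p(t) = −Γ·sgn(S_p(t)) + K_p ė_p(t) + K_i e_p(t) + K_d ë_p(t); and S_p(t) = S_q(t) − (ë_p(t) + c₁ ė_p(t) + c₂ e_p(t)). Define V₁(t)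 := ½ m_p S_p(t)² + ½ S_q(t)², V₂(t) := ½(K_p + K_d c₁ − K_i − K_d c₂)·ė_p(t)² + ½(K_p c₂ + K_i c₁ − K_i − K_d c₂)·e_p(t)² + ½(K_i + K_d c₂)·(e_p(t) + ė_p(t))², μ := min{K_i c₂, ϖ, K_d}, and E(t) := (e_p(t), ė_p(t), ë_p(t)) ∈ ℝ³ with the Euclidean norm. Then for all t: (V₁ + V₂)'(t) ≤ −‖E(t)‖·(μ·‖E(t)‖ − (ε + λ₁)·(c₁ + c₂ + 1)). -/
/-! With `σ = ë_p + c₁ ė_p + c₂ e_p` and `P = K_p ė_p + K_i e_p + K_d ë_p`, substituting the closed-loop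
relations and `S_q = S_p + σ` gives `V₁' = -Γ |S_p| + d S_p + d σ - P σ`. The switching term dominates
`d S_p`, because `|d| ≤ ε + λ₁ ≤ Γ`. The function `V₂` is chosen so that `V₂'` cancels every cross term
of `P σ`, leaving `V₂' - P σ = -(K_i c₂ e_p² + ϖ ė_p² + K_d ë_p²) ≤ -μ ‖E‖²`. Finally
`|σ| ≤ (c₁ + c₂ + 1) ‖E‖`, since each coordinate of `E` is bounded by its norm. -/


/-- Inequality (4.6) of the IDO-PSMC stability proof: with `ϖ = K_p c₁ − K_i − K_d c₂ > 0`,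
`μ = min{K_i c₂, ϖ, K_d}`, `|d| ≤ ε + λ₁`, `Γ ≥ ε + λ₁`, and the closed-loop relations,
the Lyapunov function `V₁ + V₂` satisfies
`(V₁+V₂)' ≤ −‖E‖·(μ‖E‖ − (ε+λ₁)(c₁+c₂+1))` where `E = (e_p, ė_p, ë_p) ∈ ℝ³`. -/
theorem ido_psmc_lyapunov_derivative_bound
    (c₁ c₂ Kp Ki Kd ε lambda₁ Γ mp : ℝ)
    (hc₁ : 0 < c₁) (hc₂ : 0 < c₂) (hKp : 0 < Kp) (hKi : 0 < Ki) (hKd : 0 < Kd)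
    (hε : 0 < ε) (hlambda₁ : 0 < lambda₁)
    (hϖ : 0 < Kp * c₁ - Ki - Kd * c₂)
    (hΓ : Γ ≥ ε + lambda₁)
    (e_p : ℝ → ℝ)
    (hep : Differentiable ℝ e_p) (hep' : Differentiable ℝ (deriv e_p))
    (hep'' : Differentiable ℝ (deriv (deriv e_p)))
    (d : ℝ → ℝ) (hd : ∀ t, |d t| ≤ ε + lambda₁)
    (S_q S_p : ℝ → ℝ)
    (hSq : Differentiable ℝ S_q) (hSp : Differentiable ℝ S_p)
    (hSq' : ∀ t, deriv S_q t
        = -(Kp * deriv e_p t + Ki * e_p t + Kd * deriv (deriv e_p) t) + d t)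
    (hSp' : ∀ t, mp * deriv S_p t
        = -Γ * Real.sign (S_p t) + Kp * deriv e_p t + Ki * e_p t
          + Kd * deriv (deriv e_p) t)
    (hrel : ∀ t, S_p t = S_q t - (deriv (deriv e_p) t + c₁ * deriv e_p t + c₂ * e_p t))
    (V₁ V₂ : ℝ → ℝ)
    (hV₁ : V₁ = fun t => 1 / 2 * mp * S_p t ^ 2 + 1 / 2 * S_q t ^ 2)
    (hV₂ : V₂ = fun t => 1 / 2 * (Kp + Kd * c₁ - Ki - Kd * c₂) * deriv e_p t ^ 2
        + 1 / 2 * (Kp * c₂ + Ki * c₁ - Ki - Kd * c₂) * e_p t ^ 2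
        + 1 / 2 * (Ki + Kd * c₂) * (e_p t + deriv e_p t) ^ 2)
    (μ : ℝ) (hμ : μ = min (Ki * c₂) (min (Kp * c₁ - Ki - Kd * c₂) Kd))
    (E : ℝ → EuclideanSpace ℝ (Fin 3))
    (hE : E = fun t => (WithLp.equiv 2 (Fin 3 → ℝ)).symm
        ![e_p t, deriv e_p t, deriv (deriv e_p) t]) :
    ∀ t, deriv (V₁ + V₂) t
      ≤ -(‖E t‖ * (μ * ‖E t‖ - (ε + lambda₁) * (c₁ + c₂ + 1))) := by
  intro t
  set a := e_p t with ha
  set b := deriv e_p t with hb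
  set c := deriv (deriv e_p) t with hc
  have hderiv : deriv (V₁ + V₂) t = S_p t * (mp * deriv S_p t) + S_q t * deriv S_q t
      + (Kp + Kd * c₁ - Ki - Kd * c₂) * (b * c)
      + (Kp * c₂ + Ki * c₁ - Ki - Kd * c₂) * (a * b)
      + (Ki + Kd * c₂) * ((a + b) * (b + c)) := by
    have h0 : HasDerivAt e_p b t := (hep t).hasDerivAt
    have h1 : HasDerivAt (deriv e_p) c t := (hep' t).hasDerivAt
    have hp := (hSp t).hasDerivAt
    have hq := (hSq t).hasDerivAt
    have hV₁' := ((hp.pow 2).const_mul (1 / 2 * mp)).add ((hq.pow 2).const_mul (1 / 2))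
    have hV₂' := (((h1.pow 2).const_mul (1 / 2 * (Kp + Kd * c₁ - Ki - Kd * c₂))).add
      ((h0.pow 2).const_mul (1 / 2 * (Kp * c₂ + Ki * c₁ - Ki - Kd * c₂)))).add
      (((h0.add h1).pow 2).const_mul (1 / 2 * (Ki + Kd * c₂)))
    rw [hV₁, hV₂]
    refine (hV₁'.add hV₂').deriv.trans ?_
    simp only [Pi.add_apply, ← ha, ← hb]
    push_cast
    ring
  have hnorm : ‖E t‖ ^ 2 = a ^ 2 + b ^ 2 + c ^ 2 := by
    rw [hE, EuclideanSpace.norm_sq_eq]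
    simp [Fin.sum_univ_three, a, b, c]
  have hN := norm_nonneg (E t)
  generalize ‖E t‖ = N at hnorm hN ⊢
  have hsign : S_p t * Real.sign (S_p t) = |S_p t| := by
    rcases lt_trichotomy (S_p t) 0 with h | h | h
    · rw [Real.sign_of_neg h, abs_of_neg h]; ring
    · simp [h]
    · rw [Real.sign_of_pos h, abs_of_pos h]; ring
  have hswitch : d t * S_p t ≤ Γ * |S_p t| :=
    calc d t * S_p t ≤ |d t| * |S_p t| := by rw [← abs_mul]; exact le_abs_self _
      _ ≤ Γ * |S_p t| := by gcongr; exact (hd t).trans hΓ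
  have hσ : |c + c₁ * b + c₂ * a| ≤ (c₁ + c₂ + 1) * N := by
    have haN : |a| ≤ N := abs_le_of_sq_le_sq (by nlinarith [sq_nonneg b, sq_nonneg c]) hN
    have hbN : |b| ≤ N := abs_le_of_sq_le_sq (by nlinarith [sq_nonneg a, sq_nonneg c]) hN
    have hcN : |c| ≤ N := abs_le_of_sq_le_sq (by nlinarith [sq_nonneg a, sq_nonneg b]) hN
    calc |c + c₁ * b + c₂ * a| ≤ |c| + |c₁ * b| + |c₂ * a| := abs_add_three _ _ _
      _ = |c| + c₁ * |b| + c₂ * |a| := by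
        rw [abs_mul, abs_mul, abs_of_pos hc₁, abs_of_pos hc₂]
      _ ≤ N + c₁ * N + c₂ * N := by gcongr
      _ = (c₁ + c₂ + 1) * N := by ring
  have hdσ : d t * (c + c₁ * b + c₂ * a) ≤ (ε + lambda₁) * ((c₁ + c₂ + 1) * N) :=
    calc d t * (c + c₁ * b + c₂ * a) ≤ |d t| * |c + c₁ * b + c₂ * a| := by
          rw [← abs_mul]; exact le_abs_self _
      _ ≤ (ε + lambda₁) * ((c₁ + c₂ + 1) * N) := by gcongr; exact hd t
  have hμa : μ * a ^ 2 ≤ Ki * c₂ * a ^ 2 := by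
    gcongr; rw [hμ]; exact min_le_left _ _
  have hμb : μ * b ^ 2 ≤ (Kp * c₁ - Ki - Kd * c₂) * b ^ 2 := by
    gcongr; rw [hμ]; exact (min_le_right _ _).trans (min_le_left _ _)
  have hμc : μ * c ^ 2 ≤ Kd * c ^ 2 := by
    gcongr; rw [hμ]; exact (min_le_right _ _).trans (min_le_right _ _)
  have hSq_eq : S_q t = S_p t + (c + c₁ * b + c₂ * a) := by rw [hrel t]; ring
  have hkey : deriv (V₁ + V₂) t = -(Γ * |S_p t|) + d t * S_p t + d t * (c + c₁ * b + c₂ * a)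
      - (Ki * c₂ * a ^ 2 + (Kp * c₁ - Ki - Kd * c₂) * b ^ 2 + Kd * c ^ 2) := by
    rw [hderiv, hSp', hSq', hSq_eq, ← hsign]
    ring
  have hrhs : -(N * (μ * N - (ε + lambda₁) * (c₁ + c₂ + 1)))
      = -(μ * a ^ 2 + μ * b ^ 2 + μ * c ^ 2) + (ε + lambda₁) * ((c₁ + c₂ + 1) * N) := by
    linear_combination -μ * hnorm
  rw [hkey, hrhs]
  linarith
end

section
/- Let m_p > 0, K_p, K_i, K_d ≥ 0, λ₂ ≥ 0, and Γ ≥ λ₂·(K_p + K_i + K_d) be real numbers. Let t ∈ ℝ and let e, ė, ë, S_p, Ṡ_p ∈ ℝ satisfy |e| ≤ λ₂, |ė| ≤ λ₂, |ë| ≤ λ₂, and Ṡ_p = (1/m_p)·(−Γ·sgn(S_p) + K_p·ė + K_i·e + K_d·ë), where sgn is the signum function with sgn(0) = 0. Then S_p·Ṡ_p ≤ 0. -/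
/-- Reaching/sliding-motion condition: once the tracking-error components are bounded by
`λ₂` and `Γ ≥ λ₂(K_p + K_i + K_d)` with `m_p > 0`, the proxy sliding variable satisfies
`S_p·Ṡ_p ≤ 0` (with `sgn 0 = 0`). -/
theorem sliding_motion_condition
    (mp Kp Ki Kd lambda₂ Γ : ℝ)
    (hmp : 0 < mp) (hKp : 0 ≤ Kp) (hKi : 0 ≤ Ki) (hKd : 0 ≤ Kd)
    (hlambda₂ : 0 ≤ lambda₂) (hΓ : Γ ≥ lambda₂ * (Kp + Ki + Kd))
    (t : ℝ) (e e' e'' S_p S_p' : ℝ)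
    (he : |e| ≤ lambda₂) (he' : |e'| ≤ lambda₂) (he'' : |e''| ≤ lambda₂)
    (hSp' : S_p' = (1 / mp) * (-Γ * Real.sign S_p + Kp * e' + Ki * e + Kd * e'')) :
    S_p * S_p' ≤ 0 := by
  obtain ⟨h1, h2⟩ := abs_le.mp he
  obtain ⟨h3, h4⟩ := abs_le.mp he'
  obtain ⟨h5, h6⟩ := abs_le.mp he''
  have hinv : 0 ≤ 1 / mp := by positivity
  -- The PID term is dominated by the switching gain `Γ`, so the bracket has the sign of `-S_p`.
  have hupper : Kp * e' + Ki * e + Kd * e'' ≤ Γ := by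
    linarith [mul_le_mul_of_nonneg_left h2 hKi, mul_le_mul_of_nonneg_left h4 hKp,
      mul_le_mul_of_nonneg_left h6 hKd]
  have hlower : -Γ ≤ Kp * e' + Ki * e + Kd * e'' := by
    linarith [mul_le_mul_of_nonneg_left h1 hKi, mul_le_mul_of_nonneg_left h3 hKp,
      mul_le_mul_of_nonneg_left h5 hKd]
  rw [hSp']
  rcases lt_trichotomy S_p 0 with h | h | h
  · rw [Real.sign_of_neg h]
    exact mul_nonpos_of_nonpos_of_nonneg h.le (mul_nonneg hinv (by linarith))
  · simp [h]
  · rw [Real.sign_of_pos h]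
    exact mul_nonpos_of_nonneg_of_nonpos h.le
      (mul_nonpos_of_nonneg_of_nonpos hinv (by linarith))
end

section
/- Let c₁, c₂ ≥ 0, λ₂ ≥ 0, C ≥ 0, m_p > 0, and t_f ≥ 0 be real numbers. Let S_p : [0, t_f] → ℝ be differentiable with S_p(0) = 0 and |Ṡ_p(t)| ≤ C/m_p for all t ∈ [0, t_f], and let e, ė, ë, S_q : [0, t_f] → ℝ satisfy, for all t ∈ [0, t_f]: S_p(t) = S_q(t) − (ë(t) + c₁·ė(t) + c₂·e(t)), |e(t)| ≤ λ₂, |ė(t)| ≤ λ₂, and |ë(t)| ≤ λ₂. Then for all t ∈ [0, t_f]: |S_q(t)| ≤ C·t_f/m_p + λ₂·(c₁ + c₂ + 1). -/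
/-! By the mean value inequality, `S_p(0) = 0` and `|Ṡ_p| ≤ C/m_p` give `|S_p(t)| ≤ (C/m_p) t`,
which is at most `C t_f / m_p`. The triangle inequality applied to
`S_q = S_p + (ë + c₁ė + c₂e)` then yields the bound. -/

/-- Quantitative effect of the proxy mass `m_p`: if `S_p(0) = 0`, `|Ṡ_p| ≤ C/m_p` on
`[0, t_f]`, `S_p = S_q − (ë + c₁ė + c₂e)` and `|e|, |ė|, |ë| ≤ λ₂` on `[0, t_f]`, then
`|S_q(t)| ≤ C·t_f/m_p + λ₂(c₁ + c₂ + 1)` on `[0, t_f]`. -/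
theorem proxy_mass_effect
    (c₁ c₂ lambda₂ C mp t_f : ℝ)
    (hc₁ : 0 ≤ c₁) (hc₂ : 0 ≤ c₂) (hlambda₂ : 0 ≤ lambda₂) (hC : 0 ≤ C)
    (hmp : 0 < mp) (htf : 0 ≤ t_f)
    (S_p S_p' e e' e'' S_q : ℝ → ℝ)
    (hSp0 : S_p 0 = 0)
    (hderiv : ∀ t ∈ Set.Icc (0 : ℝ) t_f,
      HasDerivWithinAt S_p (S_p' t) (Set.Icc (0 : ℝ) t_f) t)
    (hSp' : ∀ t ∈ Set.Icc (0 : ℝ) t_f, |S_p' t| ≤ C / mp)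
    (hrel : ∀ t ∈ Set.Icc (0 : ℝ) t_f,
      S_p t = S_q t - (e'' t + c₁ * e' t + c₂ * e t))
    (he : ∀ t ∈ Set.Icc (0 : ℝ) t_f, |e t| ≤ lambda₂)
    (he' : ∀ t ∈ Set.Icc (0 : ℝ) t_f, |e' t| ≤ lambda₂)
    (he'' : ∀ t ∈ Set.Icc (0 : ℝ) t_f, |e'' t| ≤ lambda₂) :
    ∀ t ∈ Set.Icc (0 : ℝ) t_f,
      |S_q t| ≤ C * t_f / mp + lambda₂ * (c₁ + c₂ + 1) := by
  intro t ht
  have hSp : |S_p t| ≤ C / mp * t := by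
    simpa [hSp0] using norm_image_sub_le_of_norm_deriv_le_segment' hderiv
      (fun x hx => hSp' x (Set.Ico_subset_Icc_self hx)) t ht
  have hSp_tf : |S_p t| ≤ C * t_f / mp := by
    calc |S_p t| ≤ C / mp * t := hSp
      _ ≤ C / mp * t_f := by gcongr; exact ht.2
      _ = C * t_f / mp := by ring
  have h₁ : |c₁ * e' t| ≤ c₁ * lambda₂ := by
    rw [abs_mul, abs_of_nonneg hc₁]
    exact mul_le_mul_of_nonneg_left (he' t ht) hc₁
  have h₂ : |c₂ * e t| ≤ c₂ * lambda₂ := by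
    rw [abs_mul, abs_of_nonneg hc₂]
    exact mul_le_mul_of_nonneg_left (he t ht) hc₂
  have h₀ := he'' t ht
  have hr := hrel t ht
  rw [abs_le] at *
  constructor <;> linarith [hSp_tf.1, hSp_tf.2, h₁.1, h₁.2, h₂.1, h₂.2, h₀.1, h₀.2]
end
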